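/- Among all simple symmetric estimators, the coordinatewise posterior-mean rule is optimal: for every measurable δ : 𝒴 → ℝ with E δ(Y_1)² < ∞, one has E Σ_{i=1}^n (δ(Y_i) − M_i)² ≥ E Σ_{i=1}^n (δ^S(Y_i) − M_i)², where δ^S(y) = Σ_{j=1}^n μ_j f_j(y) / Σ_{j=1}^n f_j(y); moreover δ^S(Y_i) = E(M_i | Y_i) almost surely for each i. -/

import Mathlib

/-!
Every simple symmetric rule is judged coordinatewise, so optimality is an orthogonality statement
in `L²` for one coordinate `i`. Under the model `π i` is uniform on `Fin n` and, given `π i = j`,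
the observation `Y i` has density `f j`. Hence for a weight `g` with `g (Y i)` integrable,
`E[g(Y i) (δ^S(Y i) - M i)]` is proportional to `∫ g(y) ∑ j, (δ^S y - μ_j) f_j(y) dν(y)`, which
vanishes because `δ^S y * ∑ j, f_j y = ∑ j, μ_j f_j y` (`integral_orthogonal`).

Indicators `g = 1_B` give the identification of `δ^S(Y i)` with `E(M i | Y i)`, and
`g = δ - δ^S` kills the cross term in the expansion of `(δ - M i)²` around `δ^S`
(`integral_sq_deltaS_le`).
-/

open MeasureTheory ProbabilityTheory ENNReal

noncomputable section

instance (n : ℕ) : MeasurableSpace (Equiv.Perm (Fin n)) := ⊤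

/-- product measure on `Fin n → 𝓨` with `i`-th coordinate having density `f i` w.r.t. `ν`. -/
def prodDens {𝓨 : Type*} [MeasurableSpace 𝓨] (ν : Measure 𝓨) {n : ℕ}
    (f : Fin n → 𝓨 → ℝ) : Measure (Fin n → 𝓨) :=
  Measure.pi fun i => ν.withDensity fun y => ENNReal.ofReal (f i y)

/-- the random-permutation Bayesian model: `π` uniform on permutations; given `π`,
the observations are independent with `Y i ∼ f (π i)`. -/
def bayesP {𝓨 : Type*} [MeasurableSpace 𝓨] (ν : Measure 𝓨) {n : ℕ}
    (f : Fin n → 𝓨 → ℝ) : Measure (Equiv.Perm (Fin n) × (Fin n → 𝓨)) :=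
  ((Nat.factorial n : ℝ≥0∞))⁻¹ •
    ∑ π : Equiv.Perm (Fin n), (Measure.dirac π).prod (prodDens ν fun i => f (π i))

/-- `M i = μ_{π(i)}` -/
def Mpar {𝓨 : Type*} {n : ℕ} (μs : Fin n → ℝ) (i : Fin n)
    (ω : Equiv.Perm (Fin n) × (Fin n → 𝓨)) : ℝ := μs (ω.1 i)

/-- the σ-algebra generated by `Y = (Y_1, …, Y_n)` -/
def sigmaY (𝓨 : Type*) [MeasurableSpace 𝓨] (n : ℕ) :
    MeasurableSpace (Equiv.Perm (Fin n) × (Fin n → 𝓨)) :=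
  MeasurableSpace.comap Prod.snd inferInstance

/-- the σ-algebra generated by `Y_i` alone -/
def sigmaYi (𝓨 : Type*) [MeasurableSpace 𝓨] {n : ℕ} (i : Fin n) :
    MeasurableSpace (Equiv.Perm (Fin n) × (Fin n → 𝓨)) :=
  MeasurableSpace.comap (fun ω => ω.2 i) inferInstance

/-- the oracle simple symmetric rule `δ^S(y) = Σ_j μ_j f_j(y) / Σ_j f_j(y)` -/
def deltaS {𝓨 : Type*} {n : ℕ} (μs : Fin n → ℝ) (f : Fin n → 𝓨 → ℝ) (y : 𝓨) : ℝ :=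
  (∑ j, μs j * f j y) / (∑ j, f j y)

/-- By symmetry, the fibers of `π ↦ π i` all have the same (nonzero) cardinality, so a sum over
permutations of a function of `π i` is proportional to the sum over indices. -/
lemma sum_perm_apply {n : ℕ} (i : Fin n) (h : Fin n → ℝ) :
    ∃ c : ℕ, ∑ π : Equiv.Perm (Fin n), h (π i) = c • ∑ j, h j := by
  classical
  refine ⟨(Finset.univ.filter fun π : Equiv.Perm (Fin n) => π i = i).card, ?_⟩
  rw [← Finset.sum_fiberwise Finset.univ (fun π : Equiv.Perm (Fin n) => π i), Finset.smul_sum]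
  refine Finset.sum_congr rfl fun j _ => ?_
  rw [Finset.sum_congr rfl (g := fun _ => h j)
    (by intro π hπ; rw [(Finset.mem_filter.mp hπ).2]), Finset.sum_const]
  congr 1
  -- Left multiplication by the transposition `(i j)` exchanges the fibers over `j` and `i`.
  refine Finset.card_bij' (fun π _ => Equiv.swap i j * π) (fun π _ => Equiv.swap i j * π)
    ?_ ?_ ?_ ?_ <;> simp +contextual [← mul_assoc]

lemma isProbabilityMeasure_dens {𝓨 : Type*} [MeasurableSpace 𝓨] {ν : Measure 𝓨} {g : 𝓨 → ℝ}
    (hg : ∫⁻ y, ENNReal.ofReal (g y) ∂ν = 1) :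
    IsProbabilityMeasure (ν.withDensity fun y => ENNReal.ofReal (g y)) :=
  ⟨by rw [withDensity_apply _ MeasurableSet.univ, Measure.restrict_univ, hg]⟩

lemma isProbabilityMeasure_prodDens {𝓨 : Type*} [MeasurableSpace 𝓨] {ν : Measure 𝓨} {n : ℕ}
    {f : Fin n → 𝓨 → ℝ} (hf : ∀ j, ∫⁻ y, ENNReal.ofReal (f j y) ∂ν = 1) :
    IsProbabilityMeasure (prodDens ν f) := by
  have := fun j => isProbabilityMeasure_dens (hf j)
  unfold prodDens
  infer_instance

lemma isProbabilityMeasure_bayesP {𝓨 : Type*} [MeasurableSpace 𝓨] {ν : Measure 𝓨} {n : ℕ}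
    {f : Fin n → 𝓨 → ℝ} (hf : ∀ j, ∫⁻ y, ENNReal.ofReal (f j y) ∂ν = 1) :
    IsProbabilityMeasure (bayesP ν f) := by
  have := fun π : Equiv.Perm (Fin n) =>
    isProbabilityMeasure_prodDens (f := fun i => f (π i)) fun i => hf (π i)
  constructor
  have h0 : (n.factorial : ℝ≥0∞) ≠ 0 := by exact_mod_cast n.factorial_ne_zero
  simp [bayesP, Fintype.card_perm, ENNReal.inv_mul_cancel h0]

lemma integrable_bayesP_iff {𝓨 : Type*} [MeasurableSpace 𝓨] {ν : Measure 𝓨} {n : ℕ}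
    {f : Fin n → 𝓨 → ℝ} (hf : ∀ j, ∫⁻ y, ENNReal.ofReal (f j y) ∂ν = 1)
    (F : Equiv.Perm (Fin n) × (Fin n → 𝓨) → ℝ) :
    Integrable F (bayesP ν f) ↔
      ∀ π : Equiv.Perm (Fin n), Integrable (fun y => F (π, y)) (prodDens ν fun i => f (π i)) := by
  have := fun π : Equiv.Perm (Fin n) =>
    isProbabilityMeasure_prodDens (f := fun i => f (π i)) fun i => hf (π i)
  have : MeasurableSingletonClass (Equiv.Perm (Fin n)) := ⟨fun _ => trivial⟩
  have h0 : (n.factorial : ℝ≥0∞) ≠ 0 := by exact_mod_cast n.factorial_ne_zero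
  rw [bayesP, integrable_smul_measure (by simp) (by simpa using h0), integrable_finsetSum_measure]
  simp only [Finset.mem_univ, true_implies]
  refine forall_congr' fun π => ?_
  rw [Measure.dirac_prod, (measurableEmbedding_prodMk_left π).integrable_map_iff]
  rfl

lemma integral_bayesP {𝓨 : Type*} [MeasurableSpace 𝓨] {ν : Measure 𝓨} {n : ℕ}
    {f : Fin n → 𝓨 → ℝ} (hf : ∀ j, ∫⁻ y, ENNReal.ofReal (f j y) ∂ν = 1)
    (F : Equiv.Perm (Fin n) × (Fin n → 𝓨) → ℝ) (hF : Integrable F (bayesP ν f)) :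
    ∫ ω, F ω ∂(bayesP ν f) = ((n.factorial : ℝ≥0∞)⁻¹).toReal *
      ∑ π : Equiv.Perm (Fin n), ∫ y, F (π, y) ∂(prodDens ν fun i => f (π i)) := by
  have := fun π : Equiv.Perm (Fin n) =>
    isProbabilityMeasure_prodDens (f := fun i => f (π i)) fun i => hf (π i)
  have : MeasurableSingletonClass (Equiv.Perm (Fin n)) := ⟨fun _ => trivial⟩
  have h1 := (integrable_bayesP_iff hf F).mp hF
  rw [bayesP, integral_smul_measure, integral_finsetSum_measure, smul_eq_mul]
  · congr 1
    refine Finset.sum_congr rfl fun π _ => ?_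
    rw [Measure.dirac_prod, (measurableEmbedding_prodMk_left π).integral_map]
  · intro π _
    rw [Measure.dirac_prod, (measurableEmbedding_prodMk_left π).integrable_map_iff]
    exact h1 π

/-- Integrability of a function of `Y i` in the model forces integrability against each `f j`,
since every `j` occurs as some `π i`. -/
lemma integrable_dens_of_bayesP {𝓨 : Type*} [MeasurableSpace 𝓨] {ν : Measure 𝓨} {n : ℕ}
    {f : Fin n → 𝓨 → ℝ} (hf_meas : ∀ j, Measurable (f j)) (hf_nonneg : ∀ j y, 0 ≤ f j y)
    (hf : ∀ j, ∫⁻ y, ENNReal.ofReal (f j y) ∂ν = 1) (i : Fin n)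
    {g : 𝓨 → ℝ} (hg : Measurable g) (hgi : Integrable (fun ω => g (ω.2 i)) (bayesP ν f))
    (j : Fin n) : Integrable (fun y => g y * f j y) ν := by
  have h1 := (integrable_bayesP_iff hf _).mp hgi (Equiv.swap i j)
  have := fun k => isProbabilityMeasure_dens (hf (Equiv.swap i j k))
  have h2 := measurePreserving_eval
    (fun k => ν.withDensity fun y => ENNReal.ofReal (f (Equiv.swap i j k) y)) i
  have h3 := (h2.integrable_comp hg.aestronglyMeasurable).mp h1
  rw [integrable_withDensity_iff (hf_meas _).ennreal_ofReal (by simp)] at h3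
  simpa [ENNReal.toReal_ofReal, hf_nonneg] using h3

lemma measurable_deltaS {𝓨 : Type*} [MeasurableSpace 𝓨] {n : ℕ} (μs : Fin n → ℝ)
    {f : Fin n → 𝓨 → ℝ} (hf_meas : ∀ j, Measurable (f j)) : Measurable (deltaS μs f) := by
  unfold deltaS
  fun_prop

/-- Each `|μ_j|` is at most `∑ k, |μ_k|`, and so is any weighted mean of the `μ_j`. -/
lemma abs_deltaS_le {𝓨 : Type*} {n : ℕ} (μs : Fin n → ℝ)
    {f : Fin n → 𝓨 → ℝ} (hf_nonneg : ∀ j y, 0 ≤ f j y) (y : 𝓨) :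
    |deltaS μs f y| ≤ ∑ k, |μs k| := by
  have hs : 0 ≤ ∑ j, f j y := Finset.sum_nonneg fun j _ => hf_nonneg j y
  rw [deltaS, abs_div, abs_of_nonneg hs]
  refine div_le_of_le_mul₀ hs (Finset.sum_nonneg fun _ _ => abs_nonneg _) ?_
  rw [Finset.mul_sum]
  refine (Finset.abs_sum_le_sum_abs _ _).trans (Finset.sum_le_sum fun j _ => ?_)
  rw [abs_mul, abs_of_nonneg (hf_nonneg j y)]
  exact mul_le_mul_of_nonneg_right
    (Finset.single_le_sum (f := fun k => |μs k|) (fun _ _ => abs_nonneg _) (Finset.mem_univ j))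
    (hf_nonneg j y)

/-- Where all densities vanish both sides are `0`, so the convention `x / 0 = 0` is harmless. -/
lemma sum_deltaS_sub_mul {𝓨 : Type*} {n : ℕ} (μs : Fin n → ℝ)
    {f : Fin n → 𝓨 → ℝ} (hf_nonneg : ∀ j y, 0 ≤ f j y) (y : 𝓨) :
    ∑ j, (deltaS μs f y - μs j) * f j y = 0 := by
  simp only [sub_mul, Finset.sum_sub_distrib, ← Finset.mul_sum]
  by_cases hs : ∑ j, f j y = 0
  · have h0 := (Finset.sum_eq_zero_iff_of_nonneg fun j _ => hf_nonneg j y).mp hs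
    rw [hs, Finset.sum_eq_zero fun j hj => by rw [h0 j hj, mul_zero]]
    simp
  · rw [deltaS, div_mul_cancel₀ _ hs, sub_self]

lemma measurable_Mpar {𝓨 : Type*} [MeasurableSpace 𝓨] {n : ℕ} (μs : Fin n → ℝ) (i : Fin n) :
    Measurable (Mpar (𝓨 := 𝓨) μs i) :=
  (measurable_from_top (f := fun π : Equiv.Perm (Fin n) => μs (π i))).comp measurable_fst

lemma abs_Mpar_le {𝓨 : Type*} {n : ℕ} (μs : Fin n → ℝ) (i : Fin n)
    (ω : Equiv.Perm (Fin n) × (Fin n → 𝓨)) : |Mpar μs i ω| ≤ ∑ k, |μs k| :=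
  Finset.single_le_sum (f := fun k => |μs k|) (fun _ _ => abs_nonneg _) (Finset.mem_univ _)

lemma measurable_obs {𝓨 : Type*} [MeasurableSpace 𝓨] {n : ℕ} (i : Fin n) :
    Measurable fun ω : Equiv.Perm (Fin n) × (Fin n → 𝓨) => ω.2 i :=
  (measurable_pi_apply i).comp measurable_snd

lemma measurable_deltaS_sub {𝓨 : Type*} [MeasurableSpace 𝓨] {n : ℕ} (μs : Fin n → ℝ)
    {f : Fin n → 𝓨 → ℝ} (hf_meas : ∀ j, Measurable (f j)) (i : Fin n) :
    Measurable fun ω => deltaS μs f (ω.2 i) - Mpar μs i ω :=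
  ((measurable_deltaS μs hf_meas).comp (measurable_obs i)).sub (measurable_Mpar μs i)

lemma abs_deltaS_sub_le {𝓨 : Type*} {n : ℕ} (μs : Fin n → ℝ) {f : Fin n → 𝓨 → ℝ}
    (hf_nonneg : ∀ j y, 0 ≤ f j y) (i : Fin n) (ω : Equiv.Perm (Fin n) × (Fin n → 𝓨)) :
    |deltaS μs f (ω.2 i) - Mpar μs i ω| ≤ ∑ k, |μs k| + ∑ k, |μs k| :=
  (abs_sub _ _).trans (add_le_add (abs_deltaS_le μs hf_nonneg _) (abs_Mpar_le μs i ω))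

lemma integrable_mul_deltaS_sub {𝓨 : Type*} [MeasurableSpace 𝓨] {ν : Measure 𝓨} {n : ℕ}
    (μs : Fin n → ℝ) {f : Fin n → 𝓨 → ℝ} (hf_meas : ∀ j, Measurable (f j))
    (hf_nonneg : ∀ j y, 0 ≤ f j y) (i : Fin n) {g : 𝓨 → ℝ}
    (hgi : Integrable (fun ω => g (ω.2 i)) (bayesP ν f)) :
    Integrable (fun ω => g (ω.2 i) * (deltaS μs f (ω.2 i) - Mpar μs i ω)) (bayesP ν f) :=
  hgi.mul_bdd (measurable_deltaS_sub μs hf_meas i).aestronglyMeasurable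
    (Filter.Eventually.of_forall fun ω => abs_deltaS_sub_le μs hf_nonneg i ω)

/-- The residual `δ^S(Y i) - M i` is orthogonal to every integrable function of `Y i`. -/
lemma integral_orthogonal {𝓨 : Type*} [MeasurableSpace 𝓨] {ν : Measure 𝓨} {n : ℕ}
    (μs : Fin n → ℝ) {f : Fin n → 𝓨 → ℝ} (hf_meas : ∀ j, Measurable (f j))
    (hf_nonneg : ∀ j y, 0 ≤ f j y) (hf : ∀ j, ∫⁻ y, ENNReal.ofReal (f j y) ∂ν = 1) (i : Fin n)
    {g : 𝓨 → ℝ} (hg : Measurable g) (hgi : Integrable (fun ω => g (ω.2 i)) (bayesP ν f)) :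
    ∫ ω, g (ω.2 i) * (deltaS μs f (ω.2 i) - Mpar μs i ω) ∂(bayesP ν f) = 0 := by
  have hδ := measurable_deltaS μs hf_meas
  rw [integral_bayesP hf _ (integrable_mul_deltaS_sub μs hf_meas hf_nonneg i hgi)]
  have key : ∀ π : Equiv.Perm (Fin n),
      ∫ y, g (y i) * (deltaS μs f (y i) - μs (π i)) ∂(prodDens ν fun i => f (π i)) =
        ∫ y, g y * ((deltaS μs f y - μs (π i)) * f (π i) y) ∂ν := by
    intro π
    have := fun k => isProbabilityMeasure_dens (hf (π k))
    have h2 := measurePreserving_eval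
      (fun k => ν.withDensity fun y => ENNReal.ofReal (f (π k) y)) i
    have hm : Measurable fun y => g y * (deltaS μs f y - μs (π i)) :=
      hg.mul (hδ.sub_const _)
    rw [prodDens]
    refine (integral_map (μ := Measure.pi _) h2.measurable.aemeasurable
      hm.aestronglyMeasurable).symm.trans ?_
    rw [h2.map_eq, integral_withDensity_eq_integral_toReal_smul (hf_meas _).ennreal_ofReal
      (by simp)]
    refine integral_congr_ae (Filter.Eventually.of_forall fun y => ?_)
    simp only [ENNReal.toReal_ofReal (hf_nonneg _ y), smul_eq_mul]
    ring
  simp only [Mpar, key]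
  obtain ⟨c, hc⟩ := sum_perm_apply i fun j => ∫ y, g y * ((deltaS μs f y - μs j) * f j y) ∂ν
  rw [hc, ← integral_finset_sum]
  · simp [← Finset.mul_sum, sum_deltaS_sub_mul μs hf_nonneg]
  · intro j _
    have h1 := integrable_dens_of_bayesP hf_meas hf_nonneg hf i hg hgi j
    have h2 : Integrable (fun y => (g y * f j y) * (deltaS μs f y - μs j)) ν :=
      h1.mul_bdd (c := ∑ k, |μs k| + |μs j|) (hδ.sub_const _).aestronglyMeasurable
        (Filter.Eventually.of_forall fun y =>
          (abs_sub _ _).trans (add_le_add (abs_deltaS_le μs hf_nonneg y) le_rfl))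
    exact h2.congr (Filter.Eventually.of_forall fun y => by ring)

lemma integrable_deltaS_sub_sq {𝓨 : Type*} [MeasurableSpace 𝓨] {ν : Measure 𝓨} {n : ℕ}
    (μs : Fin n → ℝ) {f : Fin n → 𝓨 → ℝ} (hf_meas : ∀ j, Measurable (f j))
    (hf_nonneg : ∀ j y, 0 ≤ f j y) (hf : ∀ j, ∫⁻ y, ENNReal.ofReal (f j y) ∂ν = 1) (i : Fin n) :
    Integrable (fun ω => (deltaS μs f (ω.2 i) - Mpar μs i ω) ^ 2) (bayesP ν f) := by
  have := isProbabilityMeasure_bayesP hf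
  exact (MemLp.of_bound (p := 2) (measurable_deltaS_sub μs hf_meas i).aestronglyMeasurable _
    (Filter.Eventually.of_forall fun ω => abs_deltaS_sub_le μs hf_nonneg i ω)).integrable_sq

/-- Coordinatewise optimality of `δ^S`, together with the integrability needed to sum it. -/
lemma integral_sq_deltaS_le {𝓨 : Type*} [MeasurableSpace 𝓨] {ν : Measure 𝓨} {n : ℕ}
    (μs : Fin n → ℝ) {f : Fin n → 𝓨 → ℝ} (hf_meas : ∀ j, Measurable (f j))
    (hf_nonneg : ∀ j y, 0 ≤ f j y) (hf : ∀ j, ∫⁻ y, ENNReal.ofReal (f j y) ∂ν = 1) (i : Fin n)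
    {δ : 𝓨 → ℝ} (hδ : Measurable δ)
    (hδi : Integrable (fun ω => (δ (ω.2 i)) ^ 2) (bayesP ν f)) :
    Integrable (fun ω => (δ (ω.2 i) - Mpar μs i ω) ^ 2) (bayesP ν f) ∧
    ∫ ω, (deltaS μs f (ω.2 i) - Mpar μs i ω) ^ 2 ∂(bayesP ν f)
      ≤ ∫ ω, (δ (ω.2 i) - Mpar μs i ω) ^ 2 ∂(bayesP ν f) := by
  have := isProbabilityMeasure_bayesP hf
  have hS := measurable_deltaS μs hf_meas
  have hδL : MemLp (fun ω => δ (ω.2 i)) 2 (bayesP ν f) :=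
    (memLp_two_iff_integrable_sq (hδ.comp (measurable_obs i)).aestronglyMeasurable).mpr hδi
  have hSL : MemLp (fun ω => deltaS μs f (ω.2 i)) 2 (bayesP ν f) :=
    MemLp.of_bound (hS.comp (measurable_obs i)).aestronglyMeasurable _
      (Filter.Eventually.of_forall fun ω => abs_deltaS_le μs hf_nonneg _)
  have hdL := hδL.sub hSL
  have hd2 : Integrable (fun ω => (δ (ω.2 i) - deltaS μs f (ω.2 i)) ^ 2) (bayesP ν f) :=
    hdL.integrable_sq
  have hd1 : Integrable (fun ω => (δ - deltaS μs f) (ω.2 i)) (bayesP ν f) :=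
    hdL.integrable one_le_two
  have hr2 := integrable_deltaS_sub_sq μs hf_meas hf_nonneg hf i
  have hc := integrable_mul_deltaS_sub μs hf_meas hf_nonneg i hd1
  have h0 := integral_orthogonal μs hf_meas hf_nonneg hf i (hδ.sub hS) hd1
  have hs := hd2.add hr2
  simp only [Pi.add_def] at hs
  have hexp : (fun ω => (δ (ω.2 i) - Mpar μs i ω) ^ 2) = fun ω =>
      ((δ (ω.2 i) - deltaS μs f (ω.2 i)) ^ 2 + (deltaS μs f (ω.2 i) - Mpar μs i ω) ^ 2) +
      2 * ((δ - deltaS μs f) (ω.2 i) * (deltaS μs f (ω.2 i) - Mpar μs i ω)) := by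
    funext ω
    simp only [Pi.sub_apply]
    ring
  rw [hexp]
  refine ⟨hs.add (hc.const_mul 2), ?_⟩
  rw [integral_add hs (hc.const_mul 2), integral_add hd2 hr2, integral_const_mul, h0]
  have : 0 ≤ ∫ ω, (δ (ω.2 i) - deltaS μs f (ω.2 i)) ^ 2 ∂(bayesP ν f) :=
    integral_nonneg fun _ => sq_nonneg _
  linarith

/-- among simple symmetric estimators `δ` with finite quadratic risk, the
coordinatewise posterior mean `δ^S(y) = Σ_j μ_j f_j(y)/Σ_j f_j(y)` is optimal; moreover
`δ^S(Y_i) = E(M_i | Y_i)` almost surely for each `i`. -/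
theorem stmt_1 {𝓨 : Type*} [MeasurableSpace 𝓨] (ν : Measure 𝓨) [SigmaFinite ν]
    (n : ℕ) (μs : Fin n → ℝ) (f : Fin n → 𝓨 → ℝ)
    (hf_meas : ∀ j, Measurable (f j)) (hf_nonneg : ∀ j y, 0 ≤ f j y)
    (hf_prob : ∀ j, ∫⁻ y, ENNReal.ofReal (f j y) ∂ν = 1)
    (δ : 𝓨 → ℝ) (hδ_meas : Measurable δ)
    (hδ_int : ∀ i : Fin n, Integrable (fun ω => (δ (ω.2 i)) ^ 2) (bayesP ν f)) :
    (∫ ω, ∑ i, (deltaS μs f (ω.2 i) - Mpar μs i ω) ^ 2 ∂(bayesP ν f)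
        ≤ ∫ ω, ∑ i, (δ (ω.2 i) - Mpar μs i ω) ^ 2 ∂(bayesP ν f))
    ∧ ∀ i : Fin n,
        (fun ω => deltaS μs f (ω.2 i)) =ᵐ[bayesP ν f]
          (bayesP ν f)[Mpar μs i| sigmaYi 𝓨 i] := by
  have := isProbabilityMeasure_bayesP hf_prob
  refine ⟨?_, fun i => ?_⟩
  · have h := fun i =>
      integral_sq_deltaS_le μs hf_meas hf_nonneg hf_prob i hδ_meas (hδ_int i)
    rw [integral_finsetSum _ fun i _ => (h i).1, integral_finsetSum _ fun i _ =>
      integrable_deltaS_sub_sq μs hf_meas hf_nonneg hf_prob i]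
    exact Finset.sum_le_sum fun i _ => (h i).2
  · have hS := measurable_deltaS μs hf_meas
    have hm := (measurable_obs (𝓨 := 𝓨) i).comap_le
    have hMi : Integrable (Mpar μs i) (bayesP ν f) :=
      Integrable.of_bound (measurable_Mpar μs i).aestronglyMeasurable _
        (Filter.Eventually.of_forall fun ω => abs_Mpar_le μs i ω)
    have hSi : Integrable (fun ω => deltaS μs f (ω.2 i)) (bayesP ν f) :=
      Integrable.of_bound (hS.comp (measurable_obs i)).aestronglyMeasurable _
        (Filter.Eventually.of_forall fun ω => abs_deltaS_le μs hf_nonneg _)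
    refine ae_eq_condExp_of_forall_setIntegral_eq hm hMi (fun s _ _ => hSi.integrableOn) ?_ ?_
    · rintro s ⟨B, hB, rfl⟩ _
      have hBi : Integrable (fun ω => B.indicator (fun _ => (1 : ℝ)) (ω.2 i)) (bayesP ν f) :=
        (integrable_const (1 : ℝ)).indicator (measurable_obs i hB)
      have h0 := integral_orthogonal μs hf_meas hf_nonneg hf_prob i
        (measurable_const.indicator hB) hBi
      rw [← sub_eq_zero, ← integral_sub hSi.integrableOn hMi.integrableOn,
        ← integral_indicator (measurable_obs i hB), ← h0]
      refine integral_congr_ae (Filter.Eventually.of_forall fun ω => ?_)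
      by_cases hω : ω.2 i ∈ B <;> simp [Set.indicator, hω]
    · exact (hS.comp (comap_measurable _)).aestronglyMeasurable
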